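/- Define 𝒞_{m,n} = ℒ_m + ℛ_n − 𝒜_{m,n} + Nn as an endomorphism of V^{m,n}. Then for every tensor T in the isotypic GL(N)-component of V^{m,n} labelled by (μ,ν) ∈ Λ_{m,n}(N), one has 𝒞_{m,n}(T) = (c(μ) + c(ν) + N|ν|)·T. -/

import Mathlib

open scoped BigOperators

noncomputable section

/-- Mixed tensors of valence (m,n) on an N-dimensional space, given by components. -/
abbrev Tens (N m n : ℕ) := (Fin m → Fin N) → (Fin n → Fin N) → ℂ

namespace Mixed

variable (N : ℕ)

/-- Permutation of the contravariant (V) factors. -/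
def permU (m n : ℕ) (p : Equiv.Perm (Fin m)) : Module.End ℂ (Tens N m n) where
  toFun t := fun i j => t (i ∘ p) j
  map_add' t s := rfl
  map_smul' c t := rfl

/-- Permutation of the covariant (V*) factors. -/
def permD (m n : ℕ) (q : Equiv.Perm (Fin n)) : Module.End ℂ (Tens N m n) where
  toFun t := fun i j => t i (j ∘ q)
  map_add' t s := rfl
  map_smul' c t := rfl

/-- The contraction map `tr_{ab'}` (the result, a tensor of valence (m−1,n−1), is
recorded as a function not depending on the slots a, b). -/
def ctr (m n : ℕ) (a : Fin m) (b : Fin n) : Tens N m n →ₗ[ℂ] Tens N m n where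
  toFun t := fun i j => ∑ k : Fin N,
    t (Function.update i a k) (Function.update j b k)
  map_add' t s := by funext i j; simp [Finset.sum_add_distrib]
  map_smul' c t := by funext i j; simp [Finset.mul_sum]

/-- The contraction-insertion endomorphism `τ_{ab'} = tr⁺_{ab'} ∘ tr_{ab'}`. -/
def tauC (m n : ℕ) (a : Fin m) (b : Fin n) : Module.End ℂ (Tens N m n) where
  toFun t := fun i j =>
    if i a = j b then
      ∑ k : Fin N, t (Function.update i a k) (Function.update j b k)
    else 0
  map_add' t s := by
    funext i j; by_cases h : i a = j b <;> simp [h, Finset.sum_add_distrib]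
  map_smul' c t := by
    funext i j; by_cases h : i a = j b <;> simp [h, Finset.mul_sum]

/-- `𝒜_{m,n} = ∑_{a,b'} τ_{ab'}`. -/
def A (m n : ℕ) : Module.End ℂ (Tens N m n) :=
  ∑ a : Fin m, ∑ b : Fin n, tauC N m n a b

/-- The traceless subspace: common kernel of all contractions. -/
def traceless0 (m n : ℕ) : Submodule ℂ (Tens N m n) :=
  ⨅ a : Fin m, ⨅ b : Fin n, LinearMap.ker (ctr N m n a b)

/-- `ℒ_m`: the sum of the transpositions of the V-factors. -/
def LOp (m n : ℕ) : Module.End ℂ (Tens N m n) :=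
  ∑ x ∈ Finset.univ.filter (fun x : Fin m × Fin m => x.1 < x.2),
    permU N m n (Equiv.swap x.1 x.2)

/-- `ℛ_n`: the sum of the transpositions of the V*-factors. -/
def ROp (m n : ℕ) : Module.End ℂ (Tens N m n) :=
  ∑ x ∈ Finset.univ.filter (fun x : Fin n × Fin n => x.1 < x.2),
    permD N m n (Equiv.swap x.1 x.2)

/-- The (diagonal) action of GL(N) on mixed tensors: the contragredient action on
the covariant indices. -/
def glAct (m n : ℕ) (g : GL (Fin N) ℂ) : Module.End ℂ (Tens N m n) where
  toFun t := fun i j => ∑ i' : Fin m → Fin N, ∑ j' : Fin n → Fin N,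
    ((∏ a : Fin m, (g : Matrix (Fin N) (Fin N) ℂ) (i a) (i' a)) *
      ∏ b : Fin n, ((g⁻¹ : GL (Fin N) ℂ) : Matrix (Fin N) (Fin N) ℂ) (j' b) (j b)) *
        t i' j'
  map_add' t s := by
    funext i j
    simp only [Pi.add_apply, mul_add, Finset.sum_add_distrib]
  map_smul' c t := by
    funext i j
    simp only [Pi.smul_apply, smul_eq_mul, RingHom.id_apply, Finset.mul_sum]
    refine Finset.sum_congr rfl fun i' _ => Finset.sum_congr rfl fun j' _ => by ring

/-- The centraliser algebra `C_{m,n}(N) = End_{GL(N)}(V^{m,n})`. -/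
def Cent (m n : ℕ) : Subalgebra ℂ (Module.End ℂ (Tens N m n)) :=
  Subalgebra.centralizer ℂ (Set.range (glAct N m n))

end Mixed

attribute [local instance] Classical.propDecidable

namespace Mixed

/-- The total content c(ρ) = ∑_{(i,j)∈ρ} (j − i) of a Young diagram. -/
def content (ρ : YoungDiagram) : ℤ :=
  ∑ c ∈ ρ.cells, ((c.2 : ℤ) - (c.1 : ℤ))

/-- The number of rows ℓ(ρ) of a Young diagram. -/
def nrows (ρ : YoungDiagram) : ℕ := (ρ.cells.image Prod.fst).card

/-- A (bijective) filling of the cells of ρ by {0, …, m−1}. -/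
def IsTableau (m : ℕ) (ρ : YoungDiagram) (f : Fin m → ℕ × ℕ) : Prop :=
  Function.Injective f ∧ Set.range f = ↑ρ.cells

/-- p preserves the rows of the filling f. -/
def rowPres {m : ℕ} (f : Fin m → ℕ × ℕ) (p : Equiv.Perm (Fin m)) : Prop :=
  ∀ x, (f (p x)).1 = (f x).1

/-- q preserves the columns of the filling f. -/
def colPres {m : ℕ} (f : Fin m → ℕ × ℕ) (q : Equiv.Perm (Fin m)) : Prop :=
  ∀ x, (f (q x)).2 = (f x).2

/-- The Young symmetriser c_λ = ∑_{p ∈ Row, q ∈ Col} sgn(q)·pq acting on the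
contravariant factors. -/
def ySymU (N m n : ℕ) (f : Fin m → ℕ × ℕ) : Module.End ℂ (Tens N m n) :=
  ∑ p : Equiv.Perm (Fin m), ∑ q : Equiv.Perm (Fin m),
    if rowPres f p ∧ colPres f q then
      (((Equiv.Perm.sign q : ℤ) : ℂ)) • permU N m n (p * q)
    else 0

/-- The Young symmetriser acting on the covariant factors. -/
def ySymD (N m n : ℕ) (f : Fin n → ℕ × ℕ) : Module.End ℂ (Tens N m n) :=
  ∑ p : Equiv.Perm (Fin n), ∑ q : Equiv.Perm (Fin n),
    if rowPres f p ∧ colPres f q then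
      (((Equiv.Perm.sign q : ℤ) : ℂ)) • permD N m n (p * q)
    else 0

/-- The isotypic GL(N)×GL(N)-component of `V^{m,n}` labelled by the pair of
partitions (ρ,σ): the ℂ[𝔖_m×𝔖_n]-submodule generated by the images of the Young
symmetrisers of shapes ρ and σ. -/
def glglComp (N m n : ℕ) (ρ σ : YoungDiagram) : Submodule ℂ (Tens N m n) :=
  Submodule.span ℂ {x | ∃ (fρ : Fin m → ℕ × ℕ) (fσ : Fin n → ℕ × ℕ),
    IsTableau m ρ fρ ∧ IsTableau n σ fσ ∧
    ∃ (p : Equiv.Perm (Fin m)) (q : Equiv.Perm (Fin n)) (t : Tens N m n),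
      x = permU N m n p (permD N m n q (ySymU N m n fρ (ySymD N m n fσ t)))}

end Mixed

namespace Mixed

/-- The GL(N)-equivariant embedding `V^{m-r,n-r} ⊗ E^{⊗r} ↪ V^{m,n}` obtained by
tensoring with r copies of the identity tensor E = ∑ᵢ eᵢ ⊗ eⁱ placed in the last
r contravariant and covariant slots. -/
def embE (N m n r : ℕ) (hrm : r ≤ m) (hrn : r ≤ n) :
    Tens N (m - r) (n - r) →ₗ[ℂ] Tens N m n where
  toFun t := fun i j =>
    (∏ s : Fin r,
      if i ⟨m - r + s.1, by have := s.2; omega⟩ = j ⟨n - r + s.1, by have := s.2; omega⟩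
      then (1 : ℂ) else 0) *
    t (fun x => i (Fin.castLE (Nat.sub_le m r) x)) (fun y => j (Fin.castLE (Nat.sub_le n r) y))
  map_add' t s := by funext i j; simp [mul_add]
  map_smul' c t := by funext i j; simp; ring

/-- The isotypic GL(N)-component of `V^{m,n}` labelled by the pair of partitions
(μ,ν) with m − |μ| = n − |ν| = r: the C_{m,n}(N)-submodule generated by the
embeddings `W ⊗ E^{⊗r}` of the Young-symmetrised traceless tensors
W ⊆ V₀^{m-r,n-r} of symmetry type (μ,ν). -/
def glIsoComp (N m n r : ℕ) (hrm : r ≤ m) (hrn : r ≤ n) (μ ν : YoungDiagram) :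
    Submodule ℂ (Tens N m n) :=
  Submodule.span ℂ {x | ∃ f ∈ Cent N m n,
    ∃ (fμ : Fin (m - r) → ℕ × ℕ) (fν : Fin (n - r) → ℕ × ℕ),
      IsTableau (m - r) μ fμ ∧ IsTableau (n - r) ν fν ∧
      ∃ t ∈ traceless0 N (m - r) (n - r),
        x = f (embE N m n r hrm hrn
          (ySymU N (m - r) (n - r) fμ (ySymD N (m - r) (n - r) fν t)))}

end Mixed

namespace Mixed

section YoungGeneral

variable {R : Type*} [Ring R] [Algebra ℂ R] {m : ℕ}

/-- Sum of all transpositions in a representation. -/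
def tSum (ρ : Equiv.Perm (Fin m) →* R) : R :=
  ∑ x ∈ Finset.univ.filter (fun x : Fin m × Fin m => x.1 < x.2), ρ (Equiv.swap x.1 x.2)

/-- Row symmetriser. -/
def rSym (ρ : Equiv.Perm (Fin m) →* R) (f : Fin m → ℕ × ℕ) : R :=
  ∑ p : Equiv.Perm (Fin m), if rowPres f p then ρ p else 0

/-- Column antisymmetriser. -/
def cSym (ρ : Equiv.Perm (Fin m) →* R) (f : Fin m → ℕ × ℕ) : R :=
  ∑ q : Equiv.Perm (Fin m), if colPres f q then
    (((Equiv.Perm.sign q : ℤ) : ℂ)) • ρ q else 0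

/-- Young symmetriser. -/
def ySymG (ρ : Equiv.Perm (Fin m) →* R) (f : Fin m → ℕ × ℕ) : R :=
  ∑ p : Equiv.Perm (Fin m), ∑ q : Equiv.Perm (Fin m),
    if rowPres f p ∧ colPres f q then
      (((Equiv.Perm.sign q : ℤ) : ℂ)) • ρ (p * q)
    else 0

lemma ySymG_eq (ρ : Equiv.Perm (Fin m) →* R) (f : Fin m → ℕ × ℕ) :
    ySymG ρ f = rSym ρ f * cSym ρ f := by
  unfold ySymG rSym cSym
  rw [Finset.sum_mul_sum]
  refine Finset.sum_congr rfl fun p _ => Finset.sum_congr rfl fun q _ => ?_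
  by_cases h1 : rowPres f p <;> by_cases h2 : colPres f q <;> simp [h1, h2]

lemma rowPres_mul_swap {f : Fin m → ℕ × ℕ} {x y : Fin m} (h : (f x).1 = (f y).1)
    (p : Equiv.Perm (Fin m)) : rowPres f p → rowPres f (p * Equiv.swap x y) := by
  intro hp z
  rw [Equiv.Perm.mul_apply, hp]
  rcases eq_or_ne z x with rfl | hx
  · simp [h]
  rcases eq_or_ne z y with rfl | hy
  · simp [h]
  · rw [Equiv.swap_apply_of_ne_of_ne hx hy]

lemma colPres_swap_mul {f : Fin m → ℕ × ℕ} {x y : Fin m} (h : (f x).2 = (f y).2)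
    (p : Equiv.Perm (Fin m)) : colPres f p → colPres f (Equiv.swap x y * p) := by
  intro hp z
  rw [Equiv.Perm.mul_apply, ← hp z]
  generalize p z = z
  rcases eq_or_ne z x with rfl | hx
  · simp [h]
  rcases eq_or_ne z y with rfl | hy
  · simp [h]
  · rw [Equiv.swap_apply_of_ne_of_ne hx hy]

lemma rSym_mul_swap (ρ : Equiv.Perm (Fin m) →* R) {f : Fin m → ℕ × ℕ} {x y : Fin m}
    (h : (f x).1 = (f y).1) : rSym ρ f * ρ (Equiv.swap x y) = rSym ρ f := by
  unfold rSym
  rw [Finset.sum_mul]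
  refine Fintype.sum_equiv (Equiv.mulRight (Equiv.swap x y)) _ _ fun p => ?_
  have : rowPres f (p * Equiv.swap x y) ↔ rowPres f p :=
    ⟨fun hp => by simpa [mul_assoc] using rowPres_mul_swap h _ hp, rowPres_mul_swap h p⟩
  by_cases hp : rowPres f p <;> simp [this, hp]

lemma swap_mul_cSym (ρ : Equiv.Perm (Fin m) →* R) {f : Fin m → ℕ × ℕ} {x y : Fin m}
    (hxy : x ≠ y) (h : (f x).2 = (f y).2) :
    ρ (Equiv.swap x y) * cSym ρ f = - cSym ρ f := by
  unfold cSym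
  rw [Finset.mul_sum, ← Finset.sum_neg_distrib]
  refine Fintype.sum_equiv (Equiv.mulLeft (Equiv.swap x y)) _ _ fun p => ?_
  have : colPres f (Equiv.swap x y * p) ↔ colPres f p :=
    ⟨fun hp => by simpa [← mul_assoc] using colPres_swap_mul h _ hp, colPres_swap_mul h p⟩
  by_cases hp : colPres f p <;> simp [this, hp, Equiv.Perm.sign_swap hxy]

lemma two_eq_zero_aux {z : R} (h : z = -z) : z = 0 := by
  have h2 : (2 : ℂ) • z = 0 := by
    rw [two_smul]; nth_rewrite 1 [h]; simp
  have := congrArg (fun w => (2 : ℂ)⁻¹ • w) h2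
  simpa [smul_smul] using this

lemma rSym_swap_cSym_zero (ρ : Equiv.Perm (Fin m) →* R) {f : Fin m → ℕ × ℕ}
    {lam : YoungDiagram} (hf : IsTableau m lam f) {x y : Fin m}
    (h1 : (f x).1 < (f y).1) (h2 : (f x).2 ≠ (f y).2) :
    rSym ρ f * ρ (Equiv.swap x y) * cSym ρ f = 0 := by
  have hy : f y ∈ lam.cells := by
    have : f y ∈ Set.range f := ⟨y, rfl⟩
    rw [hf.2] at this; exact_mod_cast this
  have hz : ((f x).1, (f y).2) ∈ Set.range f := by
    rw [hf.2]
    exact lam.isLowerSet (a := f y) ⟨h1.le, le_rfl⟩ hy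
  obtain ⟨z, hz⟩ := hz
  have hzx : z ≠ x := by intro h; rw [h] at hz; have h3 := congrArg Prod.snd hz; exact h2 h3
  have hzy : z ≠ y := by intro h; rw [h] at hz; exact h1.ne (congrArg Prod.fst hz).symm
  have hxy : x ≠ y := by rintro rfl; exact h2 rfl
  apply two_eq_zero_aux
  have e : Equiv.swap z x * Equiv.swap x y = Equiv.swap x y * Equiv.swap z y := by
    have := Equiv.swap_apply_apply (Equiv.swap x y) z y
    rw [Equiv.swap_apply_of_ne_of_ne hzx hzy, Equiv.swap_apply_right] at this
    rw [this]; simp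
  calc rSym ρ f * ρ (Equiv.swap x y) * cSym ρ f
      = rSym ρ f * ρ (Equiv.swap z x) * ρ (Equiv.swap x y) * cSym ρ f := by
        rw [rSym_mul_swap ρ (x := z) (y := x) (by rw [hz])]
    _ = rSym ρ f * ρ (Equiv.swap x y) * (ρ (Equiv.swap z y) * cSym ρ f) := by
        rw [mul_assoc (rSym ρ f), ← map_mul, e, map_mul]; simp only [mul_assoc]
    _ = _ := by rw [swap_mul_cSym ρ hzy (by rw [hz] : (f z).2 = (f y).2), mul_neg]

/-- coefficient of a pair. -/
def pc (f : Fin m → ℕ × ℕ) (x y : Fin m) : ℤ :=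
  (if (f x).1 = (f y).1 then 1 else 0) - (if (f x).2 = (f y).2 then 1 else 0)

lemma rSym_swap_cSym (ρ : Equiv.Perm (Fin m) →* R) {f : Fin m → ℕ × ℕ}
    {lam : YoungDiagram} (hf : IsTableau m lam f) {x y : Fin m} (hxy : x ≠ y) :
    rSym ρ f * ρ (Equiv.swap x y) * cSym ρ f = ((pc f x y : ℤ) : ℂ) • (rSym ρ f * cSym ρ f) := by
  unfold pc
  by_cases h1 : (f x).1 = (f y).1
  · have h2 : (f x).2 ≠ (f y).2 := fun h => hxy (hf.1 (Prod.ext h1 h))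
    rw [rSym_mul_swap ρ h1]; simp [h1, h2]
  by_cases h2 : (f x).2 = (f y).2
  · rw [mul_assoc, swap_mul_cSym ρ hxy h2]; simp [h1, h2]
  · simp only [h1, h2, if_false]
    rcases lt_or_gt_of_ne h1 with h | h
    · rw [rSym_swap_cSym_zero ρ hf h h2]; simp
    · rw [Equiv.swap_comm, rSym_swap_cSym_zero ρ hf h (Ne.symm h2)]; simp

/-- symmetric sums over ordered pairs. -/
lemma sum_offdiag {M : Type*} [AddCommMonoid M] (F : Fin m → Fin m → M)
    (hF : ∀ x y, F x y = F y x) :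
    ∑ x, ∑ y, (if x = y then 0 else F x y) =
      (∑ x ∈ Finset.univ.filter (fun x : Fin m × Fin m => x.1 < x.2), F x.1 x.2)
       + ∑ x ∈ Finset.univ.filter (fun x : Fin m × Fin m => x.1 < x.2), F x.1 x.2 := by
  have h2 : ∑ x ∈ Finset.univ.filter (fun x : Fin m × Fin m => x.1 < x.2), F x.1 x.2 =
      ∑ x : Fin m, ∑ y : Fin m, if x < y then F x y else 0 := by
    rw [Finset.sum_filter, Fintype.sum_prod_type]
  have h3 : ∑ x : Fin m, ∑ y : Fin m, (if x < y then F x y else 0) =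
      ∑ x : Fin m, ∑ y : Fin m, if y < x then F x y else 0 := by
    rw [Finset.sum_comm]
    refine Finset.sum_congr rfl fun x _ => Finset.sum_congr rfl fun y _ => ?_
    rw [hF]
  rw [h2]
  nth_rewrite 2 [h3]
  rw [← Finset.sum_add_distrib]
  refine Finset.sum_congr rfl fun x _ => ?_
  rw [← Finset.sum_add_distrib]
  refine Finset.sum_congr rfl fun y _ => ?_
  rcases lt_trichotomy x y with h | h | h
  · simp [h, h.ne, h.le.not_gt]
  · simp [h]
  · simp [h, h.ne', h.le.not_gt]

lemma tSum_comm (ρ : Equiv.Perm (Fin m) →* R) (p : Equiv.Perm (Fin m)) :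
    tSum ρ * ρ p = ρ p * tSum ρ := by
  have h2 : tSum ρ + tSum ρ = ∑ x, ∑ y, (if x = y then 0 else ρ (Equiv.swap x y)) :=
    (sum_offdiag (fun x y => ρ (Equiv.swap x y)) (fun x y => by rw [Equiv.swap_comm])).symm
  have h3 : (tSum ρ + tSum ρ) * ρ p = ρ p * (tSum ρ + tSum ρ) := by
    rw [h2]
    simp only [Finset.sum_mul, Finset.mul_sum]
    symm
    refine Fintype.sum_equiv p _ _ fun x => Fintype.sum_equiv p _ _ fun y => ?_
    by_cases h : x = y
    · simp [h]
    · simp only [h, if_false, EmbeddingLike.apply_eq_iff_eq]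
      rw [← map_mul, ← map_mul, Equiv.swap_apply_apply]; simp
  have h4 : (2 : ℂ) • (tSum ρ * ρ p) = (2 : ℂ) • (ρ p * tSum ρ) := by
    rw [two_smul, two_smul, ← add_mul, ← mul_add, h3]
  exact (smul_right_injective R (two_ne_zero (α := ℂ)).isUnit.ne_zero |>.eq_iff).1 h4

lemma tSum_rSym (ρ : Equiv.Perm (Fin m) →* R) (f : Fin m → ℕ × ℕ) :
    tSum ρ * rSym ρ f = rSym ρ f * tSum ρ := by
  unfold rSym
  rw [Finset.mul_sum, Finset.sum_mul]
  refine Finset.sum_congr rfl fun p _ => ?_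
  by_cases h : rowPres f p <;> simp [h, tSum_comm]

lemma sum_tab {M : Type*} [AddCommMonoid M] {f : Fin m → ℕ × ℕ} {lam : YoungDiagram}
    (hf : IsTableau m lam f) (F : ℕ × ℕ → M) : ∑ x, F (f x) = ∑ c ∈ lam.cells, F c := by
  have : lam.cells = Finset.univ.image f := by
    apply Finset.coe_injective; rw [← hf.2]; simp
  rw [this, Finset.sum_image (fun a _ b _ h => hf.1 h)]

lemma row_count (lam : YoungDiagram) (c : ℕ × ℕ) (hc : c ∈ lam.cells) :
    ∑ d ∈ lam.cells, (if d.1 = c.1 ∧ d.2 < c.2 then (1 : ℤ) else 0) = c.2 := by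
  rw [← Finset.sum_filter, Finset.sum_const, nsmul_eq_mul, mul_one]
  have : lam.cells.filter (fun d => d.1 = c.1 ∧ d.2 < c.2) =
      (Finset.range c.2).image (fun k => (c.1, k)) := by
    ext ⟨a, b⟩
    simp only [Finset.mem_filter, Finset.mem_image, Finset.mem_range, Prod.mk.injEq]
    constructor
    · rintro ⟨_, h1, h2⟩; exact ⟨b, h2, h1.symm, rfl⟩
    · rintro ⟨k, hk, rfl, rfl⟩
      exact ⟨lam.isLowerSet (a := c) ⟨le_rfl, hk.le⟩ hc, rfl, hk⟩
  rw [this, Finset.card_image_of_injective _ (fun a b h => by simpa using h)]; simp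

lemma col_count (lam : YoungDiagram) (c : ℕ × ℕ) (hc : c ∈ lam.cells) :
    ∑ d ∈ lam.cells, (if d.2 = c.2 ∧ d.1 < c.1 then (1 : ℤ) else 0) = c.1 := by
  rw [← Finset.sum_filter, Finset.sum_const, nsmul_eq_mul, mul_one]
  have : lam.cells.filter (fun d => d.2 = c.2 ∧ d.1 < c.1) =
      (Finset.range c.1).image (fun k => (k, c.2)) := by
    ext ⟨a, b⟩
    simp only [Finset.mem_filter, Finset.mem_image, Finset.mem_range, Prod.mk.injEq]
    constructor
    · rintro ⟨_, h1, h2⟩; exact ⟨a, h2, rfl, h1.symm⟩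
    · rintro ⟨k, hk, rfl, rfl⟩
      exact ⟨lam.isLowerSet (a := c) ⟨hk.le, le_rfl⟩ hc, rfl, hk⟩
  rw [this, Finset.card_image_of_injective _ (fun a b h => by simpa using h)]; simp

lemma pc_sum {f : Fin m → ℕ × ℕ} {lam : YoungDiagram} (hf : IsTableau m lam f) :
    ∑ x ∈ Finset.univ.filter (fun x : Fin m × Fin m => x.1 < x.2), pc f x.1 x.2
      = content lam := by
  have h := sum_offdiag (pc f) (fun x y => by simp [pc, eq_comm])
  have h2 : ∑ x, ∑ y, (if x = y then 0 else pc f x y) = content lam + content lam := by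
    have h3 : ∀ x y, (if x = y then 0 else pc f x y) =
       ((if (f y).1 = (f x).1 ∧ (f y).2 < (f x).2 then 1 else 0)
        - (if (f y).2 = (f x).2 ∧ (f y).1 < (f x).1 then 1 else 0)) +
       ((if (f x).1 = (f y).1 ∧ (f x).2 < (f y).2 then 1 else 0)
        - (if (f x).2 = (f y).2 ∧ (f x).1 < (f y).1 then 1 else 0)) := by
      intro x y
      by_cases hxy : x = y
      · simp [hxy]
      · have hne : ¬ ((f x).1 = (f y).1 ∧ (f x).2 = (f y).2) :=
          fun h => hxy (hf.1 (Prod.ext h.1 h.2))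
        simp only [hxy, if_false, pc]
        split_ifs <;> omega
    have h4 : ∑ x, ∑ y, ((if (f y).1 = (f x).1 ∧ (f y).2 < (f x).2 then (1 : ℤ) else 0)
        - (if (f y).2 = (f x).2 ∧ (f y).1 < (f x).1 then 1 else 0)) = content lam := by
      rw [sum_tab hf (fun c => ∑ y, ((if (f y).1 = c.1 ∧ (f y).2 < c.2 then (1 : ℤ) else 0)
        - (if (f y).2 = c.2 ∧ (f y).1 < c.1 then 1 else 0)))]
      unfold content
      refine Finset.sum_congr rfl fun c hc => ?_
      rw [sum_tab hf (fun d => ((if d.1 = c.1 ∧ d.2 < c.2 then (1 : ℤ) else 0)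
        - (if d.2 = c.2 ∧ d.1 < c.1 then 1 else 0))), Finset.sum_sub_distrib,
        row_count lam c hc, col_count lam c hc]
    simp only [h3]
    simp only [Finset.sum_add_distrib]
    congr 1
    rw [Finset.sum_comm]
    exact h4
  omega

theorem tSum_ySymG (ρ : Equiv.Perm (Fin m) →* R) {f : Fin m → ℕ × ℕ} {lam : YoungDiagram}
    (hf : IsTableau m lam f) :
    tSum ρ * ySymG ρ f = ((content lam : ℤ) : ℂ) • ySymG ρ f := by
  rw [ySymG_eq, ← mul_assoc, tSum_rSym]
  unfold tSum
  rw [Finset.mul_sum, Finset.sum_mul, ← pc_sum hf, Int.cast_sum, Finset.sum_smul]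
  refine Finset.sum_congr rfl fun x hx => ?_
  exact rSym_swap_cSym ρ hf (Finset.mem_filter.1 hx).2.ne

end YoungGeneral

end Mixed

namespace Mixed

attribute [local instance] instDecidableEqFin

/-- elementary matrix `E_{pq}` acting on the contravariant slot `a`. -/
def eU (N m n : ℕ) (a : Fin m) (p q : Fin N) : Module.End ℂ (Tens N m n) where
  toFun t := fun i j => if i a = p then t (Function.update i a q) j else 0
  map_add' t s := by funext i j; by_cases h : i a = p <;> simp [h]
  map_smul' c t := by funext i j; by_cases h : i a = p <;> simp [h]

/-- elementary matrix (transposed) acting on the covariant slot `b`. -/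
def eD (N m n : ℕ) (b : Fin n) (p q : Fin N) : Module.End ℂ (Tens N m n) where
  toFun t := fun i j => if j b = q then t i (Function.update j b p) else 0
  map_add' t s := by funext i j; by_cases h : j b = q <;> simp [h]
  map_smul' c t := by funext i j; by_cases h : j b = q <;> simp [h]

lemma eU_apply (N m n : ℕ) (a : Fin m) (p q : Fin N) (t : Tens N m n) (i j) :
    eU N m n a p q t i j = if i a = p then t (Function.update i a q) j else 0 := rfl

lemma eD_apply (N m n : ℕ) (b : Fin n) (p q : Fin N) (t : Tens N m n) (i j) :
    eD N m n b p q t i j = if j b = q then t i (Function.update j b p) else 0 := rfl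

/-- infinitesimal action of `E_{pq}`. -/
def dOp (N m n : ℕ) (p q : Fin N) : Module.End ℂ (Tens N m n) :=
  (∑ a, eU N m n a p q) - ∑ b, eD N m n b p q

lemma dOp_apply (N m n : ℕ) (p q : Fin N) (t : Tens N m n) (i j) :
    dOp N m n p q t i j = (∑ a, if i a = p then t (Function.update i a q) j else 0)
      - ∑ b, if j b = q then t i (Function.update j b p) else 0 := by
  simp only [dOp, LinearMap.sub_apply, Pi.sub_apply, LinearMap.sum_apply, Finset.sum_apply,
    eU_apply, eD_apply]

/-- quadratic Casimir. -/
def cas (N m n : ℕ) : Module.End ℂ (Tens N m n) :=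
  ∑ p : Fin N, ∑ q : Fin N, dOp N m n p q * dOp N m n q p

lemma update_update_swap {α β : Type*} [DecidableEq α] (i : α → β) {a c : α} (h : a ≠ c) :
    Function.update (Function.update i a (i c)) c (i a) = i ∘ Equiv.swap a c := by
  funext x
  rcases eq_or_ne x c with rfl | hc
  · simp
  rcases eq_or_ne x a with rfl | ha
  · simp [h]
  · simp [hc, ha, Equiv.swap_apply_of_ne_of_ne]

lemma sum_eU_eU (N m n : ℕ) (a c : Fin m) :
    ∑ p : Fin N, ∑ q : Fin N, eU N m n a p q * eU N m n c q p =
      (if a = c then (N : ℂ) • 1 else 0) + (if a = c then 0 else permU N m n (Equiv.swap a c)) := by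
  refine LinearMap.ext fun t => ?_
  funext i j
  simp only [LinearMap.sum_apply, Finset.sum_apply, Module.End.mul_apply, eU_apply]
  by_cases h : a = c
  · subst h
    simp
  · simp only [h, if_false, zero_add]
    simp only [Function.update_of_ne (Ne.symm h)]
    simp only [Finset.sum_ite_irrel, Finset.sum_const_zero, Finset.sum_ite_eq, Finset.mem_univ,
      if_true]
    rw [update_update_swap i h]
    rfl

lemma sum_eD_eD (N m n : ℕ) (a c : Fin n) :
    ∑ p : Fin N, ∑ q : Fin N, eD N m n a p q * eD N m n c q p =
      (if a = c then (N : ℂ) • 1 else 0) + (if a = c then 0 else permD N m n (Equiv.swap a c)) := by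
  refine LinearMap.ext fun t => ?_
  funext i j
  rw [Finset.sum_comm]
  simp only [LinearMap.sum_apply, Finset.sum_apply, Module.End.mul_apply, eD_apply]
  by_cases h : a = c
  · subst h
    simp
  · simp only [h, if_false, zero_add]
    simp only [Function.update_of_ne (Ne.symm h)]
    simp only [Finset.sum_ite_irrel, Finset.sum_const_zero, Finset.sum_ite_eq, Finset.mem_univ,
      if_true]
    rw [update_update_swap j h]
    rfl

lemma sum_eU_eD (N m n : ℕ) (a : Fin m) (b : Fin n) :
    ∑ p : Fin N, ∑ q : Fin N, eU N m n a p q * eD N m n b q p = tauC N m n a b := by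
  refine LinearMap.ext fun t => ?_
  funext i j
  simp only [LinearMap.sum_apply, Finset.sum_apply, Module.End.mul_apply, eU_apply, eD_apply]
  simp only [Finset.sum_ite_irrel, Finset.sum_const_zero, Finset.sum_ite_eq, Finset.mem_univ,
      if_true]
  simp [tauC, eq_comm]

lemma sum_eD_eU (N m n : ℕ) (a : Fin m) (b : Fin n) :
    ∑ p : Fin N, ∑ q : Fin N, eD N m n b p q * eU N m n a q p = tauC N m n a b := by
  refine LinearMap.ext fun t => ?_
  funext i j
  rw [Finset.sum_comm]
  simp only [LinearMap.sum_apply, Finset.sum_apply, Module.End.mul_apply, eU_apply, eD_apply]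
  simp only [Finset.sum_ite_irrel, Finset.sum_const_zero, Finset.sum_ite_eq, Finset.mem_univ,
      if_true]
  simp [tauC]

lemma sum4_comm {α β γ δ M : Type*} [Fintype α] [Fintype β] [Fintype γ] [Fintype δ]
    [AddCommMonoid M] (F : α → β → γ → δ → M) :
    ∑ p, ∑ q, ∑ a, ∑ b, F p q a b = ∑ a, ∑ b, ∑ p, ∑ q, F p q a b := by
  have h1 : ∀ p, ∑ q, ∑ a, ∑ b, F p q a b = ∑ a, ∑ b, ∑ q, F p q a b := by
    intro p
    rw [Finset.sum_comm]
    exact Finset.sum_congr rfl fun a _ => Finset.sum_comm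
  simp only [h1]
  rw [Finset.sum_comm]
  exact Finset.sum_congr rfl fun a _ => Finset.sum_comm

lemma cas_eq (N m n : ℕ) : cas N m n =
    (2 : ℂ) • (LOp N m n + ROp N m n - A N m n) + ((N : ℂ) * (m + n)) • 1 := by
  have h1 : ∀ p q : Fin N, dOp N m n p q * dOp N m n q p =
      (∑ a, ∑ c, eU N m n a p q * eU N m n c q p) + (∑ a, ∑ c, eD N m n a p q * eD N m n c q p)
      - (∑ a, ∑ b, eU N m n a p q * eD N m n b q p)
      - (∑ a, ∑ b, eD N m n b p q * eU N m n a q p) := by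
    intro p q
    rw [Finset.sum_comm (f := fun a b => eD N m n b p q * eU N m n a q p)]
    simp only [← Finset.sum_mul_sum, dOp]
    simp only [sub_mul, mul_sub]
    abel
  have e1 : ∑ p : Fin N, ∑ q : Fin N, ∑ a, ∑ c, eU N m n a p q * eU N m n c q p =
      ((N : ℂ) * m) • 1 + (2 : ℂ) • LOp N m n := by
    calc _ = ∑ a, ∑ c, ∑ p : Fin N, ∑ q : Fin N, eU N m n a p q * eU N m n c q p := by
          exact sum4_comm _
      _ = _ := by
          simp only [sum_eU_eU, Finset.sum_add_distrib]
          rw [sum_offdiag (fun a c => permU N m n (Equiv.swap a c))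
            (fun x y => by rw [Equiv.swap_comm]), two_smul]
          congr 1
          simp [← Nat.cast_smul_eq_nsmul ℂ, smul_smul, mul_comm]
  have e2 : ∑ p : Fin N, ∑ q : Fin N, ∑ a, ∑ c, eD N m n a p q * eD N m n c q p =
      ((N : ℂ) * n) • 1 + (2 : ℂ) • ROp N m n := by
    calc _ = ∑ a, ∑ c, ∑ p : Fin N, ∑ q : Fin N, eD N m n a p q * eD N m n c q p := by
          exact sum4_comm _
      _ = _ := by
          simp only [sum_eD_eD, Finset.sum_add_distrib]
          rw [sum_offdiag (fun a c => permD N m n (Equiv.swap a c))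
            (fun x y => by rw [Equiv.swap_comm]), two_smul]
          congr 1
          simp [← Nat.cast_smul_eq_nsmul ℂ, smul_smul, mul_comm]
  have e3 : ∑ p : Fin N, ∑ q : Fin N, ∑ a, ∑ b, eU N m n a p q * eD N m n b q p = A N m n := by
    calc _ = ∑ a, ∑ b, ∑ p : Fin N, ∑ q : Fin N, eU N m n a p q * eD N m n b q p := by
          exact sum4_comm _
      _ = _ := by simp only [sum_eU_eD, A]
  have e4 : ∑ p : Fin N, ∑ q : Fin N, ∑ a, ∑ b, eD N m n b p q * eU N m n a q p = A N m n := by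
    calc _ = ∑ a, ∑ b, ∑ p : Fin N, ∑ q : Fin N, eD N m n b p q * eU N m n a q p := by
          exact sum4_comm _
      _ = _ := by simp only [sum_eD_eU, A]
  unfold cas
  simp only [h1, Finset.sum_sub_distrib, Finset.sum_add_distrib, e1, e2, e3, e4]
  module

/-- a curve in GL with tangent vector `E_{pq}`. -/
lemma exists_curve (N : ℕ) (p q : Fin N) : ∃ g : ℂ → GL (Fin N) ℂ, g 0 = 1 ∧
    (∀ x y, HasDerivAt (fun t => (g t : Matrix (Fin N) (Fin N) ℂ) x y)
      (if x = p ∧ y = q then 1 else 0) 0) ∧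
    (∀ x y, HasDerivAt (fun t => ((g t)⁻¹ : GL (Fin N) ℂ).1 x y)
      (-(if x = p ∧ y = q then 1 else 0)) 0) := by
  obtain ⟨u, v, hu0, hv0, hu, hv, huv⟩ : ∃ u v : ℂ → ℂ, u 0 = 0 ∧ v 0 = 0 ∧
      HasDerivAt u 1 0 ∧ HasDerivAt v (-1) 0 ∧
      ∀ t, u t + v t + (if p = q then 1 else 0) * (u t * v t) = 0 := by
    by_cases h : p = q
    · refine ⟨fun t => Complex.exp t - 1, fun t => Complex.exp (-t) - 1, by simp, by simp,
        ?_, ?_, ?_⟩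
      · simpa using (Complex.hasDerivAt_exp 0).sub_const 1
      · simpa using ((hasDerivAt_neg (0 : ℂ)).cexp).sub_const 1
      · intro t
        have : Complex.exp t * Complex.exp (-t) = 1 := by rw [← Complex.exp_add]; simp
        simp only [h, if_true]
        linear_combination this
    · refine ⟨fun t => t, fun t => -t, by simp, by simp, hasDerivAt_id _, hasDerivAt_neg _, ?_⟩
      intro t; simp [h]
  let X : Matrix (Fin N) (Fin N) ℂ := Matrix.single p q 1
  have hX : ∀ x y, X x y = if x = p ∧ y = q then 1 else 0 := by
    intro x y; simp [X, Matrix.single_apply, eq_comm]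
  have hXX : X * X = (if p = q then (1 : ℂ) else 0) • X := by
    by_cases h : p = q
    · subst h; simp [X]
    · simp [X, h, Matrix.single_mul_single_of_ne _ _ _ _ (Ne.symm h)]
  have hc : ∀ t : ℂ, (1 + u t • X) * (1 + v t • X) = 1 := by
    intro t
    have : (1 + u t • X) * (1 + v t • X) = 1 + (u t + v t) • X + (u t * v t) • (X * X) := by
      simp only [add_mul, mul_add, one_mul, mul_one, smul_mul_smul_comm]; module
    rw [this, hXX]
    have h2 := congrArg (fun c : ℂ => 1 + c • X) (huv t)
    simp only [zero_smul, add_zero] at h2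
    refine Eq.trans ?_ h2
    module
  have hc' : ∀ t : ℂ, (1 + v t • X) * (1 + u t • X) = 1 := fun t =>
    mul_eq_one_comm.1 (hc t)
  refine ⟨fun t => ⟨1 + u t • X, 1 + v t • X, hc t, hc' t⟩, ?_, ?_, ?_⟩
  · ext; simp [hu0]
  · intro x y
    rw [← hX]
    simpa using (hu.mul_const (X x y)).const_add ((1 : Matrix (Fin N) (Fin N) ℂ) x y)
  · intro x y
    rw [← hX]
    simpa using (hv.mul_const (X x y)).const_add ((1 : Matrix (Fin N) (Fin N) ℂ) x y)

lemma prod_one (N m : ℕ) (i i' : Fin m → Fin N) :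
    (∏ a, (1 : Matrix (Fin N) (Fin N) ℂ) (i a) (i' a)) = if i' = i then 1 else 0 := by
  simp only [Matrix.one_apply]
  by_cases h : i' = i
  · simp [h]
  · simp only [h, if_false]
    obtain ⟨a, ha⟩ := Function.ne_iff.1 h
    exact Finset.prod_eq_zero (Finset.mem_univ a) (by simp [Ne.symm ha])

lemma prod_erase_one (N m : ℕ) (i i' : Fin m → Fin N) (a : Fin m) (p q : Fin N) :
    (∏ c ∈ Finset.univ.erase a, (1 : Matrix (Fin N) (Fin N) ℂ) (i c) (i' c)) *
      (if i a = p ∧ i' a = q then 1 else 0) =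
      if i a = p then (if i' = Function.update i a q then 1 else 0) else 0 := by
  by_cases h1 : i a = p
  · simp only [h1, true_and, if_true]
    by_cases h : i' = Function.update i a q
    · subst h
      rw [if_pos (Function.update_self ..), if_pos rfl, mul_one]
      refine Finset.prod_eq_one fun c hc => ?_
      rw [Function.update_of_ne (Finset.ne_of_mem_erase hc), Matrix.one_apply_eq]
    · rw [if_neg h]
      obtain ⟨c, hc⟩ := Function.ne_iff.1 h
      by_cases hca : c = a
      · subst hca
        simp at hc
        simp [hc]
      · rw [Finset.prod_eq_zero (Finset.mem_erase.2 ⟨hca, Finset.mem_univ c⟩), zero_mul]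
        rw [Function.update_of_ne hca] at hc
        simp [Matrix.one_apply, Ne.symm hc]
  · simp [h1]

lemma hasDerivAt_prod_entries (N m : ℕ) (M : ℂ → Matrix (Fin N) (Fin N) ℂ) (e : ℂ) (p q : Fin N)
    (h0 : M 0 = 1)
    (hM : ∀ x y, HasDerivAt (fun t => M t x y) (e * if x = p ∧ y = q then 1 else 0) 0)
    (i i' : Fin m → Fin N) :
    HasDerivAt (fun t => ∏ a, M t (i a) (i' a))
      (e * ∑ a, if i a = p then (if i' = Function.update i a q then 1 else 0) else 0) 0 := by
  have := HasDerivAt.fun_finsetProd (u := Finset.univ) (fun a _ => hM (i a) (i' a))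
  refine this.congr_deriv ?_
  symm
  rw [Finset.mul_sum]
  refine Finset.sum_congr rfl fun a _ => ?_
  rw [← prod_erase_one N m i i' a p q, h0, smul_eq_mul]
  ring

end Mixed

namespace Mixed

attribute [local instance] instDecidableEqFin

lemma hasDerivAt_glAct (N m n : ℕ) (p q : Fin N) (g : ℂ → GL (Fin N) ℂ) (g0 : g 0 = 1)
    (h1 : ∀ x y, HasDerivAt (fun t => (g t : Matrix (Fin N) (Fin N) ℂ) x y)
      (if x = p ∧ y = q then 1 else 0) 0)
    (h2 : ∀ x y, HasDerivAt (fun t => ((g t)⁻¹ : GL (Fin N) ℂ).1 x y)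
      (-(if x = p ∧ y = q then 1 else 0)) 0) (T : Tens N m n) :
    HasDerivAt (fun t => glAct N m n (g t) T) (dOp N m n p q T) 0 := by
  rw [hasDerivAt_pi]; intro i
  rw [hasDerivAt_pi]; intro j
  have hP : ∀ i' : Fin m → Fin N, HasDerivAt
      (fun t => ∏ a, (g t : Matrix (Fin N) (Fin N) ℂ) (i a) (i' a))
      (∑ a, if i a = p then (if i' = Function.update i a q then 1 else 0) else 0) 0 := by
    intro i'
    have := hasDerivAt_prod_entries N m (fun t => (g t).1) 1 p q (by simp [g0])
      (by simpa using h1) i i'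
    simpa using this
  have hQ : ∀ j' : Fin n → Fin N, HasDerivAt
      (fun t => ∏ b, ((g t)⁻¹ : GL (Fin N) ℂ).1 (j' b) (j b))
      (-∑ b, if j b = q then (if j' = Function.update j b p then 1 else 0) else 0) 0 := by
    intro j'
    have := hasDerivAt_prod_entries N n (fun t => ((g t)⁻¹ : GL (Fin N) ℂ).1.transpose) (-1) q p
      (by simp [g0])
      (by
        intro x y
        refine (h2 y x).congr_deriv ?_
        by_cases hx : x = q <;> by_cases hy : y = p <;> simp [hx, hy]) j j'
    simpa using this
  have hP0 : ∀ i' : Fin m → Fin N, ∏ a, (g 0 : Matrix (Fin N) (Fin N) ℂ) (i a) (i' a)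
      = if i' = i then 1 else 0 := by
    intro i'; rw [g0]; exact prod_one N m i i'
  have hQ0 : ∀ j' : Fin n → Fin N, ∏ b, ((g 0)⁻¹ : GL (Fin N) ℂ).1 (j' b) (j b)
      = if j' = j then 1 else 0 := by
    intro j'; rw [g0]; simpa [eq_comm] using prod_one N n j' j
  have key := HasDerivAt.fun_sum (u := Finset.univ) (fun (i' : Fin m → Fin N) _ =>
    HasDerivAt.fun_sum (u := Finset.univ) (fun (j' : Fin n → Fin N) _ =>
      ((hP i').mul (hQ j')).mul_const (T i' j')))
  refine HasDerivAt.congr_deriv (f := fun t => glAct N m n (g t) T i j) key ?_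
  rw [dOp_apply]
  simp only [hP0, hQ0, add_mul, Finset.sum_add_distrib, sub_eq_add_neg]
  congr 1
  · simp only [mul_ite, mul_one, mul_zero, ite_mul, zero_mul, Finset.sum_ite_eq',
      Finset.sum_ite_eq, Finset.mem_univ, if_true, Finset.sum_mul]
    rw [Finset.sum_comm]
    refine Finset.sum_congr rfl fun a _ => ?_
    by_cases h : i a = p <;> simp [h]
  · simp only [ite_mul, one_mul, zero_mul, neg_mul, Finset.sum_mul]
    rw [Finset.sum_comm]
    simp only [Finset.sum_ite_eq', Finset.sum_ite_eq, Finset.mem_univ, if_true,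
      Finset.sum_neg_distrib]
    congr 1
    rw [Finset.sum_comm]
    refine Finset.sum_congr rfl fun a _ => ?_
    by_cases h : j a = q <;> simp [h]

lemma Cent_comm_dOp (N m n : ℕ) {f : Module.End ℂ (Tens N m n)} (hf : f ∈ Cent N m n)
    (p q : Fin N) : f * dOp N m n p q = dOp N m n p q * f := by
  obtain ⟨g, g0, h1, h2⟩ := exists_curve N p q
  refine LinearMap.ext fun T => ?_
  have d1 := hasDerivAt_glAct N m n p q g g0 h1 h2 T
  have d2 := hasDerivAt_glAct N m n p q g g0 h1 h2 (f T)
  have d3 := (LinearMap.toContinuousLinearMap f).hasFDerivAt.comp_hasDerivAt (0 : ℂ) d1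
  have e : (fun t => glAct N m n (g t) (f T)) =
      (LinearMap.toContinuousLinearMap f) ∘ (fun t => glAct N m n (g t) T) := by
    funext t
    have := (Subalgebra.mem_centralizer_iff ℂ).1 hf (glAct N m n (g t)) ⟨g t, rfl⟩
    exact LinearMap.congr_fun this T
  rw [e] at d2
  exact d3.unique d2

lemma Cent_comm_cas (N m n : ℕ) {f : Module.End ℂ (Tens N m n)} (hf : f ∈ Cent N m n) :
    f * cas N m n = cas N m n * f := by
  unfold cas
  simp only [Finset.mul_sum, Finset.sum_mul]
  refine Finset.sum_congr rfl fun p _ => Finset.sum_congr rfl fun q _ => ?_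
  rw [← mul_assoc, Cent_comm_dOp N m n hf, mul_assoc, Cent_comm_dOp N m n hf, mul_assoc]

/-- insertion of identity tensors, along arbitrary splittings of slots. -/
def embG {N m n m' n' r : ℕ} (e : Fin m' ⊕ Fin r ≃ Fin m) (e' : Fin n' ⊕ Fin r ≃ Fin n)
    (t : Tens N m' n') : Tens N m n := fun i j =>
  (∏ s : Fin r, if i (e (Sum.inr s)) = j (e' (Sum.inr s)) then (1 : ℂ) else 0) *
    t (fun x => i (e (Sum.inl x))) (fun y => j (e' (Sum.inl y)))

lemma dOp_embG {N m n m' n' r : ℕ} (e : Fin m' ⊕ Fin r ≃ Fin m) (e' : Fin n' ⊕ Fin r ≃ Fin n)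
    (p q : Fin N) (t : Tens N m' n') :
    dOp N m n p q (embG e e' t) = embG e e' (dOp N m' n' p q t) := by
  funext i j
  have hl : ∀ (a : Fin m') (k : Fin N), embG e e' t (Function.update i (e (Sum.inl a)) k) j =
      (∏ s : Fin r, if i (e (Sum.inr s)) = j (e' (Sum.inr s)) then (1 : ℂ) else 0) *
        t (Function.update (fun x => i (e (Sum.inl x))) a k) (fun y => j (e' (Sum.inl y))) := by
    intro a k
    unfold embG
    congr 1
    · refine Finset.prod_congr rfl fun s _ => ?_
      rw [Function.update_of_ne (by simp)]
    · congr 1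
      funext x
      rcases eq_or_ne x a with rfl | h
      · simp
      · rw [Function.update_of_ne (by simpa using h), Function.update_of_ne h]
  have hl' : ∀ (b : Fin n') (k : Fin N), embG e e' t i (Function.update j (e' (Sum.inl b)) k) =
      (∏ s : Fin r, if i (e (Sum.inr s)) = j (e' (Sum.inr s)) then (1 : ℂ) else 0) *
        t (fun x => i (e (Sum.inl x))) (Function.update (fun y => j (e' (Sum.inl y))) b k) := by
    intro a k
    unfold embG
    congr 1
    · refine Finset.prod_congr rfl fun s _ => ?_
      rw [Function.update_of_ne (by simp)]
    · congr 1
      funext x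
      rcases eq_or_ne x a with rfl | h
      · simp
      · rw [Function.update_of_ne (by simpa using h), Function.update_of_ne h]
  have hr : ∀ s : Fin r,
      (if i (e (Sum.inr s)) = p then embG e e' t (Function.update i (e (Sum.inr s)) q) j else 0) =
      (if j (e' (Sum.inr s)) = q then embG e e' t i (Function.update j (e' (Sum.inr s)) p)
        else 0) := by
    intro s
    have hp : ∀ (i : Fin m → Fin N) (j : Fin n → Fin N),
       (∏ s : Fin r, if i (e (Sum.inr s)) = j (e' (Sum.inr s)) then (1 : ℂ) else 0) =
       (if i (e (Sum.inr s)) = j (e' (Sum.inr s)) then (1 : ℂ) else 0) *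
        ∏ s ∈ Finset.univ.erase s,
          if i (e (Sum.inr s)) = j (e' (Sum.inr s)) then (1 : ℂ) else 0 := fun i j =>
      (Finset.mul_prod_erase _ _ (Finset.mem_univ s)).symm
    have hq1 : ∀ k, (∏ s' ∈ Finset.univ.erase s,
        if Function.update i (e (Sum.inr s)) k (e (Sum.inr s')) = j (e' (Sum.inr s')) then (1 : ℂ)
          else 0) = ∏ s' ∈ Finset.univ.erase s,
        if i (e (Sum.inr s')) = j (e' (Sum.inr s')) then (1 : ℂ) else 0 := by
      intro k
      refine Finset.prod_congr rfl fun s' hs => ?_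
      rw [Function.update_of_ne (by simpa using Finset.ne_of_mem_erase hs)]
    have hq2 : ∀ k, (∏ s' ∈ Finset.univ.erase s,
        if i (e (Sum.inr s')) = Function.update j (e' (Sum.inr s)) k (e' (Sum.inr s')) then (1 : ℂ)
          else 0) = ∏ s' ∈ Finset.univ.erase s,
        if i (e (Sum.inr s')) = j (e' (Sum.inr s')) then (1 : ℂ) else 0 := by
      intro k
      refine Finset.prod_congr rfl fun s' hs => ?_
      rw [Function.update_of_ne (by simpa using Finset.ne_of_mem_erase hs)]
    have hi : ∀ k, (fun x => Function.update i (e (Sum.inr s)) k (e (Sum.inl x))) =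
        fun x => i (e (Sum.inl x)) := by
      intro k; funext x; rw [Function.update_of_ne (by simp)]
    have hj : ∀ k, (fun x => Function.update j (e' (Sum.inr s)) k (e' (Sum.inl x))) =
        fun x => j (e' (Sum.inl x)) := by
      intro k; funext x; rw [Function.update_of_ne (by simp)]
    unfold embG
    rw [hp, hp i, hq1, hq2, hi, hj, Function.update_self, Function.update_self]
    by_cases h1 : i (e (Sum.inr s)) = p <;> by_cases h2 : j (e' (Sum.inr s)) = q <;>
      simp [h1, h2, eq_comm]
    intro h3; exact absurd h3.symm h2
  rw [dOp_apply, ← e.sum_comp, ← e'.sum_comp, Fintype.sum_sum_type, Fintype.sum_sum_type,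
    Finset.sum_congr rfl (fun s _ => hr s), add_sub_add_right_eq_sub]
  simp only [hl, hl']
  rw [embG, dOp_apply, mul_sub, Finset.mul_sum, Finset.mul_sum]
  simp only [mul_ite, mul_zero]

/-- splitting of slots. -/
def splitE (m r : ℕ) (h : r ≤ m) : Fin (m - r) ⊕ Fin r ≃ Fin m :=
  finSumFinEquiv.trans (finCongr (Nat.sub_add_cancel h))

lemma embE_eq (N m n r : ℕ) (hrm : r ≤ m) (hrn : r ≤ n) (t : Tens N (m - r) (n - r)) :
    embE N m n r hrm hrn t = embG (splitE m r hrm) (splitE n r hrn) t := by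
  funext i j
  unfold embG embE
  simp only [LinearMap.coe_mk, AddHom.coe_mk]
  congr 1

lemma cas_embE (N m n r : ℕ) (hrm : r ≤ m) (hrn : r ≤ n) (t : Tens N (m - r) (n - r)) :
    cas N m n (embE N m n r hrm hrn t) = embE N m n r hrm hrn (cas N (m - r) (n - r) t) := by
  unfold cas
  simp only [LinearMap.sum_apply, map_sum, Module.End.mul_apply]
  refine Finset.sum_congr rfl fun p _ => Finset.sum_congr rfl fun q _ => ?_
  rw [embE_eq, dOp_embG, dOp_embG, embE_eq]

/-- permU as a representation. -/
def permUHom (N m n : ℕ) : Equiv.Perm (Fin m) →* Module.End ℂ (Tens N m n) where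
  toFun := permU N m n
  map_one' := rfl
  map_mul' _ _ := rfl

/-- permD as a representation. -/
def permDHom (N m n : ℕ) : Equiv.Perm (Fin n) →* Module.End ℂ (Tens N m n) where
  toFun := permD N m n
  map_one' := rfl
  map_mul' _ _ := rfl

lemma LOp_ySymU (N m n : ℕ) {f : Fin m → ℕ × ℕ} {lam : YoungDiagram} (hf : IsTableau m lam f) :
    LOp N m n * ySymU N m n f = ((content lam : ℤ) : ℂ) • ySymU N m n f :=
  tSum_ySymG (permUHom N m n) hf

lemma ROp_ySymD (N m n : ℕ) {f : Fin n → ℕ × ℕ} {lam : YoungDiagram} (hf : IsTableau n lam f) :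
    ROp N m n * ySymD N m n f = ((content lam : ℤ) : ℂ) • ySymD N m n f :=
  tSum_ySymG (permDHom N m n) hf

lemma ROp_comm_ySymU (N m n : ℕ) (f : Fin m → ℕ × ℕ) :
    ROp N m n * ySymU N m n f = ySymU N m n f * ROp N m n := by
  have h : ∀ p q, permD N m n q * permU N m n p = permU N m n p * permD N m n q :=
    fun _ _ => rfl
  have h2 : ∀ p, ROp N m n * permU N m n p = permU N m n p * ROp N m n := by
    intro p
    unfold ROp
    simp only [Finset.mul_sum, Finset.sum_mul, h]
  unfold ySymU
  simp only [Finset.mul_sum, Finset.sum_mul]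
  refine Finset.sum_congr rfl fun p _ => Finset.sum_congr rfl fun q _ => ?_
  split_ifs
  · rw [mul_smul_comm, h2, smul_mul_assoc]
  · simp

lemma mem_traceless0 {N m n : ℕ} {t : Tens N m n} :
    t ∈ traceless0 N m n ↔ ∀ a b i j,
      ∑ k : Fin N, t (Function.update i a k) (Function.update j b k) = 0 := by
  simp only [traceless0, Submodule.mem_iInf, LinearMap.mem_ker]
  refine forall_congr' fun a => forall_congr' fun b => ?_
  constructor
  · intro h i j; exact congrFun (congrFun h i) j
  · intro h; funext i j; exact h i j

lemma traceless_permU {N m n : ℕ} {t : Tens N m n} (ht : t ∈ traceless0 N m n) (p) :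
    permU N m n p t ∈ traceless0 N m n := by
  rw [mem_traceless0] at *
  intro a b i j
  have := ht (p.symm a) b (i ∘ p) j
  simp only [← Function.update_comp_equiv] at this
  exact this

lemma traceless_permD {N m n : ℕ} {t : Tens N m n} (ht : t ∈ traceless0 N m n) (p) :
    permD N m n p t ∈ traceless0 N m n := by
  rw [mem_traceless0] at *
  intro a b i j
  have := ht a (p.symm b) i (j ∘ p)
  simp only [← Function.update_comp_equiv] at this
  exact this

lemma traceless_ySymU {N m n : ℕ} {t : Tens N m n} (ht : t ∈ traceless0 N m n) (f) :
    ySymU N m n f t ∈ traceless0 N m n := by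
  unfold ySymU
  simp only [LinearMap.sum_apply]
  refine Submodule.sum_mem _ fun p _ => Submodule.sum_mem _ fun q _ => ?_
  split_ifs
  · exact Submodule.smul_mem _ _ (traceless_permU ht _)
  · exact Submodule.zero_mem _

lemma traceless_ySymD {N m n : ℕ} {t : Tens N m n} (ht : t ∈ traceless0 N m n) (f) :
    ySymD N m n f t ∈ traceless0 N m n := by
  unfold ySymD
  simp only [LinearMap.sum_apply]
  refine Submodule.sum_mem _ fun p _ => Submodule.sum_mem _ fun q _ => ?_
  split_ifs
  · exact Submodule.smul_mem _ _ (traceless_permD ht _)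
  · exact Submodule.zero_mem _

lemma A_traceless {N m n : ℕ} {t : Tens N m n} (ht : t ∈ traceless0 N m n) :
    A N m n t = 0 := by
  rw [mem_traceless0] at ht
  unfold A
  simp only [LinearMap.sum_apply]
  refine Finset.sum_eq_zero fun a _ => Finset.sum_eq_zero fun b _ => ?_
  funext i j
  simp only [tauC, LinearMap.coe_mk, AddHom.coe_mk, Pi.zero_apply]
  rw [ht, ite_self]

lemma cas_young {N m n : ℕ} {μ ν : YoungDiagram} {fμ : Fin m → ℕ × ℕ} {fν : Fin n → ℕ × ℕ}
    (hμ : IsTableau m μ fμ) (hν : IsTableau n ν fν) {t : Tens N m n}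
    (ht : t ∈ traceless0 N m n) :
    cas N m n (ySymU N m n fμ (ySymD N m n fν t)) =
      (2 * ((content μ + content ν : ℤ) : ℂ) + (N : ℂ) * (m + n)) •
        (ySymU N m n fμ (ySymD N m n fν t)) := by
  have hA := A_traceless (traceless_ySymU (traceless_ySymD ht fν) fμ)
  have hL := LinearMap.congr_fun (LOp_ySymU N m n hμ) (ySymD N m n fν t)
  have hR := LinearMap.congr_fun (ROp_comm_ySymU N m n fμ) (ySymD N m n fν t)
  have hR2 := LinearMap.congr_fun (ROp_ySymD N m n hν) t
  simp only [Module.End.mul_apply, LinearMap.smul_apply] at hL hR hR2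
  rw [hR2, map_smul] at hR
  rw [cas_eq]
  simp only [LinearMap.add_apply, LinearMap.sub_apply, LinearMap.smul_apply, hA, hL, hR,
    Module.End.one_apply]
  push_cast
  module

end Mixed

/-- the operator 𝒞_{m,n} = ℒ_m + ℛ_n − 𝒜_{m,n} + N·n acts on the
isotypic GL(N)-component of V^{m,n} labelled by (μ,ν) ∈ Λ_{m,n}(N)
(with m − |μ| = n − |ν| = r and ℓ(μ) + ℓ(ν) ≤ N) as the scalar
c(μ) + c(ν) + N·|ν|. -/
theorem Casimir_scalar_on_isotypic (N m n r : ℕ) (hm : 1 ≤ m) (hn : 1 ≤ n)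
    (hrm : r ≤ m) (hrn : r ≤ n) (μ ν : YoungDiagram)
    (hμ : μ.card = m - r) (hν : ν.card = n - r)
    (hrows : Mixed.nrows μ + Mixed.nrows ν ≤ N)
    (T : Tens N m n) (hT : T ∈ Mixed.glIsoComp N m n r hrm hrn μ ν) :
    (Mixed.LOp N m n + Mixed.ROp N m n - Mixed.A N m n
        + ((N * n : ℕ) : ℂ) • (1 : Module.End ℂ (Tens N m n))) T =
      (((Mixed.content μ + Mixed.content ν : ℤ) : ℂ) + (N : ℂ) * (ν.card : ℂ)) • T := by
  have hcas : (Mixed.LOp N m n + Mixed.ROp N m n - Mixed.A N m n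
        + ((N * n : ℕ) : ℂ) • (1 : Module.End ℂ (Tens N m n))) =
      (2 : ℂ)⁻¹ • (Mixed.cas N m n - ((N : ℂ) * (m - n)) • 1) := by
    rw [Mixed.cas_eq]; push_cast; module
  rw [hcas, hν]
  have hmain : ∀ x ∈ Mixed.glIsoComp N m n r hrm hrn μ ν, Mixed.cas N m n x =
      (2 * ((Mixed.content μ + Mixed.content ν : ℤ) : ℂ)
        + (N : ℂ) * (((m - r : ℕ) : ℂ) + ((n - r : ℕ) : ℂ))) • x := by
    intro x hx
    unfold Mixed.glIsoComp at hx
    induction hx using Submodule.span_induction with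
    | mem x hx =>
      obtain ⟨f, hf, fμ, fν, h1, h2, t, ht, rfl⟩ := hx
      have h3 := LinearMap.congr_fun (Mixed.Cent_comm_cas N m n hf)
        (Mixed.embE N m n r hrm hrn
          (Mixed.ySymU N (m - r) (n - r) fμ (Mixed.ySymD N (m - r) (n - r) fν t)))
      simp only [Module.End.mul_apply] at h3
      rw [← h3, Mixed.cas_embE, Mixed.cas_young h1 h2 ht, map_smul, map_smul]
    | zero => simp
    | add x y _ _ hx hy => rw [map_add, hx, hy, smul_add]
    | smul a x _ hx => rw [map_smul, hx, smul_comm]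
  have h := hmain T hT
  simp only [LinearMap.smul_apply, LinearMap.sub_apply, h, Module.End.one_apply]
  rw [← sub_smul, smul_smul]
  congr 1
  rw [Nat.cast_sub hrm, Nat.cast_sub hrn]
  ring
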